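/- Suppose f ∈ C([0,1] × [0,∞), [0,∞)), α ≥ 0, βᵢ ≥ 0 with 0 < η₁ < ... < ηₙ < 1 and k := 1 − (α + Σᵢ βᵢ) > 0, and either (f₀ = ∞ and f^∞ = 0) or (f⁰ = 0 and f_∞ = ∞), where f₀ = lim_{u→0⁺} min_{t∈[0,1]} f(t,u)/u, f⁰ = lim_{u→0⁺} max_{t∈[0,1]} f(t,u)/u, f_∞ = lim_{u→∞} min_{t∈[0,1]} f(t,u)/u, f^∞ = lim_{u→∞} max_{t∈[0,1]} f(t,u)/u. Then the boundary value problem u⁗(t) + f(t, u(t)) = 0 on (0,1), u′(0) = u′(1) = u″(0) = 0, u(0) = α∫₀¹ u(s) ds + Σᵢ βᵢ u(ηᵢ), has at least one positive solution (a function u ∈ C([0,1]) with u(t) > 0 for t ∈ (0,1) satisfying the equation and boundary conditions). -/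

import Mathlib

/-!
Let `g t s = (t³(1-s)² - (t-s)₊³)/6` be the Green function of `u⁗ + y = 0` with
`u(0) = u'(0) = u''(0) = u'(1) = 0`. A function `v` on `[0,1]` solves the boundary value problem as
soon as it is a fixed point of `v ↦ T (f(·, v))`, where
`(T y)(t) = ∫₀¹ g t s y(s) ds + a(y)` and the constant `a(y)` is chosen to satisfy the nonlocal
condition at `0` (`exists_solution`). Since `t³ g(1,s) ≤ g(t,s) ≤ g(1,s)`, for `y ≥ 0` the function
`T y` satisfies `t³ (T y)(1) ≤ (T y)(t) ≤ (T y)(1)`, so its maximum is its value at `1`.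

A positive `v` is written as amplitude times profile, `v = c w` with `t³ ≤ w ≤ 1`. Put
`N(c,w) = (T f(·, c w))(1)`. Sublinear growth gives `N(r,w) ≥ r` and `N(R,w) ≤ R` for all
profiles `w`, for suitable `0 < r ≤ R`; superlinear growth gives the reversed inequalities
(`opT_one_le`, `le_opT_one`). The map sending `(c,w)` to the clamping to `[r,R]` of `N(c,w)`
(respectively of `2c - N(c,w)`) together with the normalized profile of `T f(·, c w)` is a continuous
self-map of `[r,R] × profiles`, and the set of profiles with a fixed Lipschitz constant is convex and
compact by Arzelà–Ascoli. It has a fixed point by Schauder's theorem, and the inequalities on `N`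
show that there the clamping is inactive, so `T f(·, c w) = c w` (`exists_fixedPoint_opT`). This
replaces the fixed point index on cones and treats both growth conditions alike.

Schauder's theorem (`schauder`) is deduced from Brouwer's theorem, which is proved from the absence
of a `C¹` retraction of the ball onto the sphere, following Milnor and Rogers: for such a retraction
`r`, the map `x + t (r x - x)` is a bijection of the ball for small `t`, so the polynomial
`t ↦ ∫ det (1 + t (r' - 1))` is constant for small `t`, hence everywhere, although it vanishes at
`t = 1` because `r'` is singular.
-/

open Set intervalIntegral Filter

noncomputable def G (t s : ℝ) : ℝ :=
  if s ≤ t then (t^3*(1-s)^2 - (t-s)^3)/6 else t^3*(1-s)^2/6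

noncomputable def e (s : ℝ) : ℝ := s*(1-s)^2/6

noncomputable def H (α k : ℝ) {n : ℕ} (β η : Fin n → ℝ) (t s : ℝ) : ℝ :=
  G t s + (α/k) * (∫ τ in (0:ℝ)..1, G τ s) + (1/k) * ∑ i, β i * G (η i) s

/-! ### Absence of a retraction onto the sphere -/

section Brouwer
open MeasureTheory Metric

/-- `t ↦ det (1 + t A)` is a polynomial whose degree is at most the dimension; the bound does not
depend on `A`, which makes interpolation at fixed nodes possible under an integral. -/
theorem exists_poly_det {E : Type*} [NormedAddCommGroup E] [NormedSpace ℝ E]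
    [FiniteDimensional ℝ E] (A : E →L[ℝ] E) :
    ∃ p : Polynomial ℝ, p.natDegree ≤ Module.finrank ℝ E ∧
      ∀ t : ℝ, p.eval t = (1 + t • A : E →L[ℝ] E).det := by
  classical
  let b := Module.finBasis ℝ E
  let M := LinearMap.toMatrix b b (A : E →ₗ[ℝ] E)
  refine ⟨Matrix.det ((Polynomial.X : Polynomial ℝ) • M.map Polynomial.C
    + (1 : Matrix _ _ ℝ).map Polynomial.C), ?_, fun t => ?_⟩
  · simpa using Polynomial.natDegree_det_X_add_C_le M 1
  · rw [← Polynomial.coe_evalRingHom, RingHom.map_det]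
    rw [ContinuousLinearMap.det, ← LinearMap.det_toMatrix b]
    congr 1
    ext i j
    simp [M, Matrix.one_apply, LinearMap.toMatrix_apply, Finsupp.single_apply]
    rw [add_comm, mul_comm]
    congr 1
    by_cases h : i = j
    · simp [h]
    · simp [h, Ne.symm h]

/-- A Lipschitz map on the unit ball that vanishes on the sphere extends by zero, with the same
constant: a segment leaving the ball meets the sphere. -/
theorem lipschitzWith_extend {E : Type*} [NormedAddCommGroup E] [NormedSpace ℝ E]
    {g : E → E} {K : NNReal} (hg : LipschitzOnWith K g (closedBall 0 1))
    (h0 : ∀ x, ‖x‖ = 1 → g x = 0) :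
    LipschitzWith K (fun x => if ‖x‖ ≤ 1 then g x else 0) := by
  have key : ∀ x y : E, ‖x‖ ≤ 1 → ¬ ‖y‖ ≤ 1 → ‖g x‖ ≤ K * dist x y := by
    intro x y hx hy
    have hc : ContinuousOn (fun t : ℝ => ‖x + t • (y - x)‖) (Icc 0 1) := by fun_prop
    have := intermediate_value_Icc (zero_le_one) hc
    obtain ⟨t, ht, hz⟩ := this (show (1:ℝ) ∈ Icc _ _ by
      constructor
      · simpa using hx
      · simpa using (not_le.1 hy).le)
    have h1 := hg.dist_le_mul x (by simpa using hx) (x + t • (y - x)) (by simpa using hz.le)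
    rw [h0 _ hz, dist_zero_right] at h1
    refine h1.trans (mul_le_mul_of_nonneg_left ?_ K.2)
    rw [dist_eq_norm, dist_comm, dist_eq_norm]
    simp only [sub_add_cancel_left, norm_neg, norm_smul, Real.norm_eq_abs, abs_of_nonneg ht.1]
    exact mul_le_of_le_one_left (norm_nonneg _) ht.2
  refine LipschitzWith.of_dist_le_mul fun x y => ?_
  by_cases hx : ‖x‖ ≤ 1 <;> by_cases hy : ‖y‖ ≤ 1
  · simp only [hx, hy, if_true]
    exact hg.dist_le_mul x (by simpa using hx) y (by simpa using hy)
  · simp only [hx, hy, if_true, if_false, dist_zero_right]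
    exact key x y hx hy
  · simp only [hx, hy, if_true, if_false, dist_zero_left]
    rw [dist_comm x]
    exact key y x hy hx
  · simp only [hx, hy, if_false, dist_self]
    positivity

/-- A small perturbation of the identity in the direction of a self-map of the ball that fixes the
sphere is a bijection of the ball. Surjectivity is the contraction principle for `x ↦ y - t g x`,
with `g` the extension of `r - id` by zero. -/
theorem bijOn_perturb {E : Type*} [NormedAddCommGroup E] [NormedSpace ℝ E] [CompleteSpace E]
    {r : E → E} {K : NNReal} (hK : LipschitzOnWith K (fun x => r x - x) (closedBall 0 1))
    (hr1 : ∀ x, ‖x‖ ≤ 1 → ‖r x‖ ≤ 1) (hr0 : ∀ x, ‖x‖ = 1 → r x = x)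
    {t : ℝ} (ht : t ∈ Icc (0:ℝ) 1) (htK : t * K < 1) :
    BijOn (fun x => x + t • (r x - x)) (closedBall 0 1) (closedBall 0 1) := by
  have hg := lipschitzWith_extend hK (fun x hx => by simp [hr0 x hx])
  set g : E → E := fun x => if ‖x‖ ≤ 1 then r x - x else 0 with hgdef
  have hcontr : ∀ y : E, ContractingWith (⟨t, ht.1⟩ * K) (fun x => y - t • g x) := by
    intro y
    refine ⟨by exact_mod_cast htK, LipschitzWith.of_dist_le_mul fun x z => ?_⟩
    rw [dist_sub_left, dist_smul₀, Real.norm_eq_abs, abs_of_nonneg ht.1]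
    refine (mul_le_mul_of_nonneg_left (hg.dist_le_mul x z) ht.1).trans_eq ?_
    exact (mul_assoc t (K:ℝ) (dist x z)).symm
  refine ⟨fun x hx => ?_, fun x hx z hz hxz => ?_, fun y hy => ?_⟩
  · have h1 : ‖x‖ ≤ 1 := by simpa using hx
    have : x + t • (r x - x) = (1 - t) • x + t • r x := by module
    simp only [this]
    exact (convex_closedBall (0:E) 1) hx (by simpa using hr1 x h1) (by linarith [ht.2]) ht.1
      (by ring)
  · have h1 : ‖x‖ ≤ 1 := by simpa using hx
    have h2 : ‖z‖ ≤ 1 := by simpa using hz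
    refine (hcontr (x + t • (r x - x))).fixedPoint_unique' ?_ ?_
    · simp [Function.IsFixedPt, hgdef, h1]
    · simp only at hxz
      rw [hxz]
      simp [Function.IsFixedPt, hgdef, h2]
  · let x := (hcontr y).fixedPoint
    have hx : y - t • g x = x := (hcontr y).fixedPoint_isFixedPt
    by_cases h : ‖x‖ ≤ 1
    · refine ⟨x, by simpa using h, ?_⟩
      simp only [hgdef, h, if_true] at hx
      simp only
      nth_rewrite 1 [← hx]
      abel
    · exfalso
      simp only [hgdef, h, if_false, smul_zero, sub_zero] at hx
      rw [← hx] at h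
      exact h (by simpa using hy)

/-- There is no `C¹` retraction of the unit ball onto the unit sphere. -/
theorem no_retraction {E : Type*} [NormedAddCommGroup E] [InnerProductSpace ℝ E]
    [FiniteDimensional ℝ E] (r : E → E) (hr : ∀ x ∈ closedBall (0:E) 1, ContDiffAt ℝ 1 r x)
    (hr1 : ∀ x, ‖x‖ ≤ 1 → ‖r x‖ = 1) (hr0 : ∀ x, ‖x‖ = 1 → r x = x) : False := by
  let _ : MeasurableSpace E := borel E
  have : BorelSpace E := ⟨rfl⟩
  set B := closedBall (0:E) 1 with hB
  have hBc : IsCompact B := isCompact_closedBall 0 1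
  have hcd : ContDiffOn ℝ 1 (fun x => r x - x) B := fun x hx =>
    ((hr x hx).sub contDiffAt_id).contDiffWithinAt
  obtain ⟨K, hK⟩ := (hcd.locallyLipschitzOn (convex_closedBall 0 1)).exists_lipschitzOnWith_of_compact hBc
  let A : E → E →L[ℝ] E := fun x => fderiv ℝ r x - 1
  have hA : ContinuousOn A B := fun x hx =>
    (((hr x hx).fderiv_right (m := 0) (by norm_num)).continuousAt.sub
      continuousAt_const).continuousWithinAt
  obtain ⟨C, hC⟩ := hBc.exists_bound_of_continuousOn hA
  have hdetc : Continuous (fun L : E →L[ℝ] E => L.det) := ContinuousLinearMap.continuous_det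
  have hint : ∀ t : ℝ, IntegrableOn (fun x => (1 + t • A x : E →L[ℝ] E).det) B := fun t =>
    (hdetc.comp_continuousOn (continuousOn_const.add (hA.const_smul t))).integrableOn_compact hBc
  -- near the identity the determinant is positive
  obtain ⟨δ, hδ, hδ'⟩ : ∃ δ > 0, ∀ L : E →L[ℝ] E, ‖L‖ < δ → 0 < (1 + L).det := by
    have h1 : ContinuousAt (fun L : E →L[ℝ] E => (1 + L).det) 0 :=
      (hdetc.comp (continuous_const.add continuous_id)).continuousAt
    have h2 := h1.eventually (lt_mem_nhds (a := 0) (by simp [ContinuousLinearMap.det]))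
    obtain ⟨δ, hδ, h⟩ := Metric.eventually_nhds_iff.1 h2
    exact ⟨δ, hδ, fun L hL => h (by simpa using hL)⟩
  obtain ⟨t₀, ht₀, ht₁, htK, htC⟩ : ∃ t₀ : ℝ, 0 < t₀ ∧ t₀ ≤ 1 ∧ t₀ * K < 1 ∧ t₀ * |C| < δ := by
    have h1 : ∀ᶠ t : ℝ in nhdsWithin 0 (Ioi 0), t * K < 1 :=
      (Continuous.tendsto' (f := fun t : ℝ => t * K) (by fun_prop) 0 0 (by simp)).eventually
        (gt_mem_nhds one_pos) |>.filter_mono nhdsWithin_le_nhds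
    have h2 : ∀ᶠ t : ℝ in nhdsWithin 0 (Ioi 0), t * |C| < δ :=
      (Continuous.tendsto' (f := fun t : ℝ => t * |C|) (by fun_prop) 0 0 (by simp)).eventually
        (gt_mem_nhds hδ) |>.filter_mono nhdsWithin_le_nhds
    have h3 : ∀ᶠ t : ℝ in nhdsWithin 0 (Ioi 0), t ≤ 1 :=
      (Iic_mem_nhds one_pos : Iic (1:ℝ) ∈ nhds (0:ℝ)) |> fun h => mem_nhdsWithin_of_mem_nhds h
    obtain ⟨t, ht⟩ := (h1.and (h2.and (h3.and self_mem_nhdsWithin))).exists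
    exact ⟨t, ht.2.2.2, ht.2.2.1, ht.1, ht.2.1⟩
  -- for small `t` the map `x + t (r x - x)` preserves the ball and its orientation, hence its volume
  have hvol : ∀ t ∈ Icc 0 t₀, ∫ x in B, (1 + t • A x : E →L[ℝ] E).det = volume.real B := by
    intro t ht
    have hbij := bijOn_perturb hK (fun x hx => (hr1 x hx).le) hr0 ⟨ht.1, ht.2.trans ht₁⟩
      ((mul_le_mul_of_nonneg_right ht.2 K.2).trans_lt htK)
    have hder : ∀ x ∈ B, HasFDerivWithinAt (fun x => x + t • (r x - x))
        (1 + t • A x : E →L[ℝ] E) B x := fun x hx =>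
      ((hasFDerivAt_id x).add ((((hr x hx).differentiableAt (by norm_num)).hasFDerivAt.sub
        (hasFDerivAt_id x)).const_smul t)).hasFDerivWithinAt
    have := integral_image_eq_integral_abs_det_fderiv_smul volume
      isClosed_closedBall.measurableSet hder hbij.injOn (fun _ => (1:ℝ))
    rw [hbij.image_eq] at this
    simp only [setIntegral_const, smul_eq_mul, mul_one] at this
    rw [this]
    refine setIntegral_congr_fun isClosed_closedBall.measurableSet fun x hx => ?_
    have hp : 0 < (1 + t • A x : E →L[ℝ] E).det := by
      apply hδ'
      rw [norm_smul, Real.norm_eq_abs, abs_of_nonneg ht.1]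
      refine lt_of_le_of_lt ?_ htC
      exact mul_le_mul ht.2 ((hC x hx).trans (le_abs_self C)) (norm_nonneg _) ht₀.le
    simp only [abs_of_pos hp]
  -- Lagrange interpolation transfers the identity to `t = 1`
  set d := Module.finrank ℝ E
  let v : ℕ → ℝ := fun j => t₀ * (j / (d + 1))
  have hv : InjOn v (Finset.range (d+1)) := by
    intro i _ j _ hij
    have hd : (d:ℝ) + 1 ≠ 0 := by positivity
    simp only [v] at hij
    field_simp at hij
    exact_mod_cast hij
  have hvm : ∀ j ∈ Finset.range (d+1), v j ∈ Icc 0 t₀ := by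
    intro j hj
    have hj' : (j:ℝ) ≤ d + 1 := by exact_mod_cast (Finset.mem_range.1 hj).le
    refine ⟨by positivity, mul_le_of_le_one_right ht₀.le ?_⟩
    rw [div_le_one (by positivity)]
    exact hj'
  let w : ℕ → ℝ := fun j => (Lagrange.basis (Finset.range (d+1)) v j).eval 1
  have hlag : ∀ p : Polynomial ℝ, p.natDegree ≤ d →
      p.eval 1 = ∑ j ∈ Finset.range (d+1), p.eval (v j) * w j := by
    intro p hp
    have h1 := Lagrange.eq_interpolate (s := Finset.range (d+1)) (f := p) hv (by
      rw [Finset.card_range]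
      exact lt_of_le_of_lt (Polynomial.degree_le_of_natDegree_le hp)
        (by exact_mod_cast Nat.lt_succ_self d))
    conv_lhs => rw [h1]
    simp [Lagrange.interpolate_apply, Polynomial.eval_finsetSum, w]
  have hw : ∑ j ∈ Finset.range (d+1), w j = 1 := by
    have := hlag 1 (by simp)
    simpa using this.symm
  have hone : ∫ x in B, (1 + (1:ℝ) • A x : E →L[ℝ] E).det = volume.real B := by
    have : ∀ x, (1 + (1:ℝ) • A x : E →L[ℝ] E).det
        = ∑ j ∈ Finset.range (d+1), (1 + v j • A x : E →L[ℝ] E).det * w j := by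
      intro x
      obtain ⟨p, hp, hpe⟩ := exists_poly_det (A x)
      simp only [← hpe]
      exact hlag p hp
    simp only [this]
    rw [integral_finsetSum _ fun j _ => (hint (v j)).mul_const _]
    simp only [MeasureTheory.integral_mul_const]
    rw [Finset.sum_congr rfl fun j hj => by rw [hvol _ (hvm j hj)], ← Finset.mul_sum, hw, mul_one]
  -- but `r` has singular derivative
  have hzero : ∀ x ∈ ball (0:E) 1, (1 + (1:ℝ) • A x : E →L[ℝ] E).det = 0 := by
    intro x hx
    have hAx : 1 + (1:ℝ) • A x = fderiv ℝ r x := by simp [A]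
    rw [hAx]
    have hd : HasFDerivAt r (fderiv ℝ r x) x :=
      ((hr x (ball_subset_closedBall hx)).differentiableAt (by norm_num)).hasFDerivAt
    by_contra hne
    have hsurj : Function.Surjective (fderiv ℝ r x) := by
      have := (LinearMap.isUnit_iff_isUnit_det (fderiv ℝ r x : E →ₗ[ℝ] E)).2 (IsUnit.mk0 _ hne)
      exact ((Module.End.isUnit_iff _).1 this).2
    obtain ⟨y, hy⟩ := hsurj (r x)
    have h1 := hd.inner ℝ hd
    have h2 : HasFDerivAt (fun z => inner ℝ (r z) (r z)) (0 : E →L[ℝ] ℝ) x := by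
      refine (hasFDerivAt_const (1:ℝ) x).congr_of_eventuallyEq ?_
      filter_upwards [isOpen_ball.mem_nhds hx] with z hz
      rw [real_inner_self_eq_norm_sq, hr1 z (by simpa using (ball_subset_closedBall hz))]
      norm_num
    have h3 := congrArg (fun L : E →L[ℝ] ℝ => L y) (h1.unique h2)
    simp [hy, hr1 x (by simpa using (ball_subset_closedBall hx))] at h3
  have hpos : 0 < volume.real B :=
    ENNReal.toReal_pos (measure_closedBall_pos _ _ one_pos).ne' hBc.measure_lt_top.ne
  rw [← hone] at hpos
  have : ∫ x in B, (1 + (1:ℝ) • A x : E →L[ℝ] E).det = 0 := by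
    have hae : B =ᵐ[volume] ball (0:E) 1 := by
      rw [hB, ← ball_union_sphere]
      exact union_ae_eq_left_of_ae_eq_empty
        (ae_eq_empty.2 (Measure.addHaar_sphere_of_ne_zero _ _ one_ne_zero))
    rw [setIntegral_congr_set hae]
    exact setIntegral_eq_zero_of_forall_eq_zero hzero
  linarith

/-! ### The fixed point theorems of Brouwer and Schauder -/

/-- Brouwer's theorem for `C¹` maps. If `F` had no fixed point, sending `x` to the point
`x + l x • n x` where the ray from `F x` through `x` leaves the ball would be a retraction; `l x` is
the larger root of a quadratic with positive discriminant `D x`. -/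
theorem brouwer_contDiff {E : Type*} [NormedAddCommGroup E] [InnerProductSpace ℝ E]
    [FiniteDimensional ℝ E] (F : E → E) (hF : ContDiff ℝ 1 F) (hF1 : ∀ x, ‖F x‖ ≤ 1) :
    ∃ x, ‖x‖ ≤ 1 ∧ F x = x := by
  by_contra! hne
  let n : E → E := fun x => x - F x
  let b : E → ℝ := fun x => inner ℝ x (n x)
  let D : E → ℝ := fun x => b x ^ 2 + ‖n x‖ ^ 2 * (1 - ‖x‖ ^ 2)
  let l : E → ℝ := fun x => (-b x + √(D x)) / ‖n x‖ ^ 2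
  have hn : ∀ x, ‖x‖ ≤ 1 → 0 < ‖n x‖ := fun x hx =>
    norm_pos_iff.2 (sub_ne_zero.2 (hne x hx).symm)
  have hb : ∀ x, ‖x‖ = 1 → 0 < b x := by
    intro x hx
    have h1 := hn x hx.le
    have h2 : b x = 1 - inner ℝ x (F x) := by
      simp [b, n, inner_sub_right, hx]
    have h3 : ‖n x‖ ^ 2 = 1 - 2 * inner ℝ x (F x) + ‖F x‖ ^ 2 := by
      simp [n, norm_sub_sq_real, hx]
    have h4 := hF1 x
    have h5 : ‖F x‖ ^ 2 ≤ 1 := pow_le_one₀ (norm_nonneg _) h4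
    have h6 : 0 < ‖n x‖ ^ 2 := by positivity
    linarith
  have hD : ∀ x, ‖x‖ ≤ 1 → 0 < D x := by
    intro x hx
    have h1 := hn x hx
    rcases hx.lt_or_eq with h | h
    · have : 0 < 1 - ‖x‖ ^ 2 := by nlinarith [norm_nonneg x]
      have := mul_pos (pow_pos h1 2) this
      simp only [D]
      positivity
    · have := hb x h
      simp only [D, h]
      norm_num
      positivity
  refine no_retraction (fun x => x + l x • n x) (fun x hx => ?_) (fun x hx => ?_) (fun x hx => ?_)
  · have hx : ‖x‖ ≤ 1 := by simpa using hx
    have hnc : ContDiff ℝ 1 n := contDiff_id.sub hF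
    have hbc : ContDiff ℝ 1 b := contDiff_id.inner ℝ hnc
    have hDc : ContDiff ℝ 1 D :=
      (hbc.pow 2).add ((hnc.norm_sq ℝ).mul (contDiff_const.sub (contDiff_id.norm_sq ℝ)))
    have hlc : ContDiffAt ℝ 1 l x :=
      (hbc.contDiffAt.neg.add (hDc.contDiffAt.sqrt (hD x hx).ne')).div
        (hnc.norm_sq ℝ).contDiffAt (pow_pos (hn x hx) 2).ne'
    exact contDiffAt_id.add (hlc.smul hnc.contDiffAt)
  · have h1 := hn x hx
    have h2 : ‖x + l x • n x‖ ^ 2 = 1 := by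
      rw [norm_add_sq_real, norm_smul, inner_smul_right, mul_pow, Real.norm_eq_abs, sq_abs]
      change ‖x‖ ^ 2 + 2 * (l x * b x) + l x ^ 2 * ‖n x‖ ^ 2 = 1
      have h3 : l x * ‖n x‖ ^ 2 = -b x + √(D x) := div_mul_cancel₀ _ (by positivity)
      have h4 := Real.sq_sqrt (hD x hx).le
      have h5 : (l x * ‖n x‖ ^ 2 + b x) ^ 2 = b x ^ 2 + ‖n x‖ ^ 2 * (1 - ‖x‖ ^ 2) := by
        rw [h3, neg_add_cancel_comm, h4]
      have h6 : ‖n x‖ ^ 2 ≠ 0 := by positivity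
      apply mul_left_cancel₀ h6
      linear_combination h5
    exact (pow_eq_one_iff_of_nonneg (norm_nonneg _) two_ne_zero).1 h2
  · have : l x = 0 := by
      have := hb x hx
      simp [l, D, hx, Real.sqrt_sq this.le]
    simp [this]

theorem brouwer_continuous {E : Type*} [NormedAddCommGroup E] [InnerProductSpace ℝ E]
    [FiniteDimensional ℝ E] (F : E → E) (hF : Continuous F) (hF1 : ∀ x, ‖F x‖ ≤ 1) :
    ∃ x, F x = x := by
  by_contra! hne
  obtain ⟨x₀, -, hx₀⟩ := (isCompact_closedBall (0:E) 1).exists_isMinOn ⟨0, by simp⟩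
    (f := fun x => dist (F x) x) (by fun_prop)
  set ε := dist (F x₀) x₀ with hε
  have hεp : 0 < ε := dist_pos.2 (hne x₀)
  -- a `C¹` map within half the least displacement of `F`, rescaled into the ball, has a fixed point
  obtain ⟨g, hg, hgF, -⟩ := hF.exists_contDiff_approx 1 (ε := fun _ => ε / 2)
    continuous_const (fun _ => by positivity)
  have hg1 : ∀ x, ‖g x‖ ≤ 1 + ε / 2 := by
    intro x
    have h1 := hgF x
    rw [dist_eq_norm] at h1
    have := norm_add_le (g x - F x) (F x)
    rw [sub_add_cancel] at this
    linarith [hF1 x]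
  have hc : 0 < 1 + ε / 2 := by positivity
  obtain ⟨x, hx, hfix⟩ := brouwer_contDiff (fun x => (1 + ε / 2)⁻¹ • g x)
    (contDiff_const.smul hg) (fun x => by
      rw [norm_smul, norm_inv, Real.norm_of_nonneg hc.le, inv_mul_le_iff₀ hc, mul_one]
      exact hg1 x)
  have h1 : ε ≤ dist (F x) x := hx₀ (by simpa using hx)
  have h2 : g x = x + (ε / 2) • x := by
    have := (inv_smul_eq_iff₀ hc.ne').1 hfix
    rw [this]; module
  have h3 : dist (g x) x ≤ ε / 2 := by
    rw [h2, dist_self_add_left, norm_smul, Real.norm_of_nonneg (by positivity)]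
    exact mul_le_of_le_one_right (by positivity) hx
  have h4 := hgF x
  have := dist_triangle_left (F x) x (g x)
  linarith

/-- Brouwer's theorem on the standard simplex, which is a retract of the whole space by `ρ`. -/
theorem brouwer_simplex {ι : Type*} [Fintype ι] [Nonempty ι] (g : (ι → ℝ) → (ι → ℝ))
    (hg : ContinuousOn g (stdSimplex ℝ ι)) (hm : MapsTo g (stdSimplex ℝ ι) (stdSimplex ℝ ι)) :
    ∃ x ∈ stdSimplex ℝ ι, g x = x := by
  classical
  let S : (ι → ℝ) → ℝ := fun x => ∑ i, max (x i) 0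
  -- the mass missing from the positive part is spread evenly before rescaling, so that no division
  -- by zero occurs
  let ρ : (ι → ℝ) → (ι → ℝ) := fun x i =>
    (max (x i) 0 + max (1 - S x) 0 / Fintype.card ι) / max (S x) 1
  have hS : Continuous S := by fun_prop
  have hpos : ∀ x, 0 < max (S x) 1 := fun x => lt_max_of_lt_right one_pos
  have hρc : Continuous ρ := by
    refine continuous_pi fun i => Continuous.div (by fun_prop) (by fun_prop) fun x => (hpos x).ne'
  have hcard : (Fintype.card ι : ℝ) ≠ 0 := by exact_mod_cast Fintype.card_ne_zero
  have hρm : ∀ x, ρ x ∈ stdSimplex ℝ ι := by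
    intro x
    refine ⟨fun i => by simp only [ρ]; positivity, ?_⟩
    simp only [ρ]
    rw [← Finset.sum_div, Finset.sum_add_distrib, Finset.sum_const, Finset.card_univ, nsmul_eq_mul,
      mul_div_cancel₀ _ hcard, div_eq_one_iff_eq (hpos x).ne']
    change S x + _ = _
    rcases le_total (S x) 1 with h | h
    · rw [max_eq_left (by linarith), max_eq_right h]; ring
    · rw [max_eq_right (by linarith), max_eq_left h]; ring
  have hρid : ∀ x ∈ stdSimplex ℝ ι, ρ x = x := by
    intro x hx
    have h1 : S x = 1 := by
      rw [← hx.2]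
      exact Finset.sum_congr rfl fun i _ => max_eq_left (hx.1 i)
    ext i
    simp [ρ, h1, max_eq_left (hx.1 i)]
  obtain ⟨y, hy⟩ := brouwer_continuous
    (fun y : EuclideanSpace ℝ ι => WithLp.toLp 2 (g (ρ (WithLp.ofLp y)))) (by
      have : Continuous (fun x => g (ρ x)) := hg.comp_continuous hρc hρm
      exact (PiLp.continuous_toLp 2 _).comp (this.comp (PiLp.continuous_ofLp 2 _))) (fun y => by
      have h := hm (hρm (WithLp.ofLp y))
      rw [EuclideanSpace.norm_eq]
      refine Real.sqrt_le_iff.2 ⟨zero_le_one, ?_⟩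
      rw [one_pow, ← h.2]
      refine Finset.sum_le_sum fun i _ => ?_
      have h0 := h.1 i
      have h1 : g (ρ (WithLp.ofLp y)) i ≤ 1 := by
        rw [← h.2]
        exact Finset.single_le_sum (fun j _ => h.1 j) (Finset.mem_univ i)
      simp only [Real.norm_eq_abs, sq_abs]
      nlinarith)
  have hy' : g (ρ (WithLp.ofLp y)) = WithLp.ofLp y := congrArg WithLp.ofLp hy
  have hmem : WithLp.ofLp y ∈ stdSimplex ℝ ι := by rw [← hy']; exact hm (hρm _)
  refine ⟨_, hmem, ?_⟩
  rwa [hρid _ hmem] at hy'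

/-- Schauder's fixed point theorem, for a compact convex set. The minimum of `dist (T x) x` is at most
every `ε > 0`, by Brouwer's theorem applied to the Schauder projection `x ↦ P (w x)` onto the convex
hull of a finite `ε`-net. -/
theorem schauder {X : Type*} [NormedAddCommGroup X] [NormedSpace ℝ X] {C : Set X}
    (hconv : Convex ℝ C) (hcomp : IsCompact C) (hne : C.Nonempty) (T : X → X)
    (hT : ContinuousOn T C) (hTm : MapsTo T C C) : ∃ x ∈ C, T x = x := by
  obtain ⟨x₀, hx₀C, hx₀⟩ := hcomp.exists_isMinOn hne
    (f := fun x => dist (T x) x) (continuous_dist.comp_continuousOn (hT.prodMk continuousOn_id))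
  refine ⟨x₀, hx₀C, dist_le_zero.1 (le_of_forall_pos_le_add fun ε hε => ?_)⟩
  rw [zero_add]
  obtain ⟨t, htC, htf, hcov⟩ := hcomp.finite_cover_balls hε
  have := htf.fintype
  have htne : Nonempty t := by
    obtain ⟨y, hy⟩ := hne
    obtain ⟨i, hi, -⟩ := mem_iUnion₂.1 (hcov hy)
    exact ⟨⟨i, hi⟩⟩
  let φ : X → t → ℝ := fun x i => max (ε - dist x i) 0
  let S : X → ℝ := fun x => ∑ i, φ x i
  have hφ0 : ∀ x i, 0 ≤ φ x i := fun x i => le_max_right _ _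
  have hSpos : ∀ x ∈ C, 0 < S x := by
    intro x hx
    obtain ⟨i, hi, hxi⟩ := mem_iUnion₂.1 (hcov hx)
    refine Finset.sum_pos' (fun j _ => hφ0 x j) ⟨⟨i, hi⟩, Finset.mem_univ _, ?_⟩
    exact lt_max_of_lt_left (sub_pos.2 hxi)
  let w : X → t → ℝ := fun x i => φ x i / S x
  have hwc : ContinuousOn w C := by
    refine continuousOn_pi.2 fun i => ContinuousOn.div ?_ ?_ fun x hx => (hSpos x hx).ne'
    · exact Continuous.continuousOn (by fun_prop)
    · exact Continuous.continuousOn (by fun_prop)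
  have hwm : ∀ x ∈ C, w x ∈ stdSimplex ℝ t := by
    intro x hx
    refine ⟨fun i => div_nonneg (hφ0 x i) (hSpos x hx).le, ?_⟩
    simp only [w]
    rw [← Finset.sum_div]
    exact div_self (hSpos x hx).ne'
  let P : (t → ℝ) → X := fun c => ∑ i, c i • (i : X)
  have hPc : Continuous P := by fun_prop
  have hPm : ∀ c ∈ stdSimplex ℝ t, P c ∈ C := fun c hc =>
    hconv.sum_mem (fun i _ => hc.1 i) hc.2 (fun i _ => htC i.2)
  have hPw : ∀ x ∈ C, dist x (P (w x)) ≤ ε := by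
    intro x hx
    have hw := hwm x hx
    have h1 : x - P (w x) = ∑ i, w x i • (x - (i : X)) := by
      simp only [smul_sub, Finset.sum_sub_distrib, ← Finset.sum_smul, hw.2, one_smul, P]
    rw [dist_eq_norm, h1]
    calc ‖∑ i, w x i • (x - (i : X))‖ ≤ ∑ i, w x i * ε := by
          refine norm_sum_le_of_le _ fun i _ => ?_
          rw [norm_smul, Real.norm_of_nonneg (hw.1 i), ← dist_eq_norm]
          rcases le_total (dist x i) ε with h | h
          · exact mul_le_mul_of_nonneg_left h (hw.1 i)
          · have : w x i = 0 := by
              have : φ x i = 0 := max_eq_right (by linarith)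
              simp [w, this]
            simp [this]
      _ = ε := by rw [← Finset.sum_mul, hw.2, one_mul]
  obtain ⟨c, hc, hfix⟩ := brouwer_simplex (fun c => w (T (P c)))
    (hwc.comp (hT.comp hPc.continuousOn hPm) fun c hc => hTm (hPm c hc))
    (fun c hc => hwm _ (hTm (hPm c hc)))
  have h1 := hPw _ (hTm (hPm c hc))
  rw [hfix] at h1
  exact (hx₀ (hPm c hc)).trans h1
end Brouwer

/-! ### The Green function and the solution operator -/

/-- The Green function of `u⁗ + y = 0`, `u(0) = u'(0) = u''(0) = u'(1) = 0`, for `t, s ∈ [0,1]`. The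
two branches are combined by a positive part, so that joint continuity is immediate. -/
noncomputable def gk (t s : ℝ) : ℝ := (t ^ 3 * (1 - s) ^ 2 - max (t - s) 0 ^ 3) / 6

theorem gk_one {s : ℝ} (hs : s ∈ Icc (0:ℝ) 1) : gk 1 s = s * (1 - s) ^ 2 / 6 := by
  rw [gk, max_eq_left (by linarith [hs.2])]; ring

theorem gk_one_nonneg {s : ℝ} (hs : s ∈ Icc (0:ℝ) 1) : 0 ≤ gk 1 s := by
  rw [gk_one hs]
  have := hs.1
  positivity

theorem gk_one_le {s : ℝ} (hs : s ∈ Icc (0:ℝ) 1) : gk 1 s ≤ 1 := by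
  rw [gk_one hs]
  have : (1 - s) ^ 2 ≤ 1 := pow_le_one₀ (by linarith [hs.2]) (by linarith [hs.1])
  nlinarith [hs.1, hs.2, sq_nonneg (1 - s)]

theorem gk_le {t s : ℝ} (ht : t ∈ Icc (0:ℝ) 1) (hs : s ∈ Icc (0:ℝ) 1) : gk t s ≤ gk 1 s := by
  obtain ⟨ht0, ht1⟩ := ht
  rw [gk_one hs, gk]
  obtain ⟨hs0, hs1⟩ := hs
  refine div_le_div_of_nonneg_right ?_ (by norm_num)
  rcases le_total s t with h | h
  · rw [max_eq_left (by linarith)]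
    have key : s * (1 - s) ^ 2 - (t ^ 3 * (1 - s) ^ 2 - (t - s) ^ 3)
        = s * (1 - t) ^ 2 * ((2 - s) * t + 1 - 2 * s) := by ring
    have : 0 ≤ (2 - s) * t + 1 - 2 * s := by nlinarith
    have : 0 ≤ s * (1 - t) ^ 2 * ((2 - s) * t + 1 - 2 * s) := by positivity
    linarith
  · rw [max_eq_right (by linarith)]
    have : t ^ 3 ≤ s := (pow_le_of_le_one ht0 ht1 (by norm_num)).trans h
    have := mul_le_mul_of_nonneg_right this (sq_nonneg (1 - s))
    linarith

theorem le_gk {t s : ℝ} (ht : t ∈ Icc (0:ℝ) 1) (hs : s ∈ Icc (0:ℝ) 1) :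
    t ^ 3 * gk 1 s ≤ gk t s := by
  obtain ⟨ht0, ht1⟩ := ht
  rw [gk_one hs, gk]
  obtain ⟨hs0, hs1⟩ := hs
  -- both `t - s` and `0` are at most `t (1 - s)`; cubing leaves a factor `s` to spare
  have h1 : max (t - s) 0 ≤ t * (1 - s) := max_le (by nlinarith) (by nlinarith)
  have h2 := pow_le_pow_left₀ (le_max_right (t - s) 0) h1 3
  rw [← mul_div_assoc]
  refine div_le_div_of_nonneg_right ?_ (by norm_num)
  have : t ^ 3 * (s * (1 - s) ^ 2) = t ^ 3 * (1 - s) ^ 2 - (t * (1 - s)) ^ 3 := by ring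
  linarith

theorem abs_cube_sub_le {a b : ℝ} (ha : a ∈ Icc (0:ℝ) 1) (hb : b ∈ Icc (0:ℝ) 1) :
    |a ^ 3 - b ^ 3| ≤ 3 * |a - b| := by
  have : a ^ 3 - b ^ 3 = (a ^ 2 + a * b + b ^ 2) * (a - b) := by ring
  rw [this, abs_mul]
  refine mul_le_mul_of_nonneg_right ?_ (abs_nonneg _)
  obtain ⟨ha0, ha1⟩ := ha
  obtain ⟨hb0, hb1⟩ := hb
  rw [abs_of_nonneg (by positivity)]
  nlinarith

theorem gk_lipschitz {t t' s : ℝ} (ht : t ∈ Icc (0:ℝ) 1) (ht' : t' ∈ Icc (0:ℝ) 1)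
    (hs : s ∈ Icc (0:ℝ) 1) : |gk t s - gk t' s| ≤ |t - t'| := by
  have h1 := abs_cube_sub_le ht ht'
  have hm : ∀ x ∈ Icc (0:ℝ) 1, max (x - s) 0 ∈ Icc (0:ℝ) 1 := fun x hx =>
    ⟨le_max_right _ _, max_le (by linarith [hx.2, hs.1]) zero_le_one⟩
  have h2 := abs_cube_sub_le (hm t ht) (hm t' ht')
  have h3 := abs_max_sub_max_le_abs (t - s) (t' - s) 0
  rw [sub_sub_sub_cancel_right] at h3
  have h4 : |(t ^ 3 - t' ^ 3) * (1 - s) ^ 2| ≤ 3 * |t - t'| := by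
    rw [abs_mul, abs_of_nonneg (sq_nonneg (1 - s))]
    exact (mul_le_of_le_one_right (abs_nonneg _)
      (pow_le_one₀ (by linarith [hs.2]) (by linarith [hs.1]))).trans h1
  have h5 : gk t s - gk t' s = ((t ^ 3 - t' ^ 3) * (1 - s) ^ 2
      - (max (t - s) 0 ^ 3 - max (t' - s) 0 ^ 3)) / 6 := by
    simp only [gk]; ring
  rw [h5, abs_div, abs_of_pos (by norm_num : (0:ℝ) < 6), div_le_iff₀ (by norm_num)]
  refine (abs_sub _ _).trans ?_
  linarith

theorem continuous_gk : Continuous (Function.uncurry gk) := by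
  unfold gk Function.uncurry
  fun_prop

/-- The solution of `u⁗ + y = 0` with homogeneous boundary conditions, on `[0,1]`. -/
noncomputable def gI (y : ℝ → ℝ) (t : ℝ) : ℝ := ∫ s in (0:ℝ)..1, gk t s * y s

/-- The additive constant that enforces the nonlocal condition
`u(0) = α ∫ u + ∑ βᵢ u(ηᵢ)` for `u = gI y + aI y`, when `k = 1 - (α + ∑ βᵢ)` is nonzero. -/
noncomputable def aI (α k : ℝ) {n : ℕ} (β η : Fin n → ℝ) (y : ℝ → ℝ) : ℝ :=
  (α * (∫ t in (0:ℝ)..1, gI y t) + ∑ i, β i * gI y (η i)) / k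

/-- The solution operator `y ↦ u` of the boundary value problem `u⁗ + y = 0`. -/
noncomputable def opT (α k : ℝ) {n : ℕ} (β η : Fin n → ℝ) (y : ℝ → ℝ) (t : ℝ) : ℝ :=
  gI y t + aI α k β η y

theorem intervalIntegrable_gk {y : ℝ → ℝ} (hy : Continuous y) (t : ℝ) (a b : ℝ) :
    IntervalIntegrable (fun s => gk t s * y s) MeasureTheory.volume a b := by
  refine Continuous.intervalIntegrable ?_ _ _
  have : Continuous (gk t) := continuous_gk.uncurry_left t
  fun_prop

theorem continuous_gI {Z : Type*} [TopologicalSpace Z] [FirstCountableTopology Z]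
    {Y : Z → ℝ → ℝ} (hY : Continuous (Function.uncurry Y)) {τ : Z → ℝ} (hτ : Continuous τ) :
    Continuous fun z => gI (Y z) (τ z) := by
  unfold gI
  refine continuous_parametric_intervalIntegral_of_continuous' ?_ _ _
  exact (continuous_gk.comp ((hτ.comp continuous_fst).prodMk continuous_snd)).mul hY

theorem continuous_aI {Z : Type*} [TopologicalSpace Z] [FirstCountableTopology Z]
    (α k : ℝ) {n : ℕ} (β η : Fin n → ℝ)
    {Y : Z → ℝ → ℝ} (hY : Continuous (Function.uncurry Y)) :
    Continuous fun z => aI α k β η (Y z) := by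
  unfold aI
  have h1 : Continuous fun z => ∫ t in (0:ℝ)..1, gI (Y z) t := by
    refine continuous_parametric_intervalIntegral_of_continuous' ?_ _ _
    exact continuous_gI (Z := Z × ℝ) (Y := fun p => Y p.1) (τ := Prod.snd)
      (hY.comp ((continuous_fst.comp continuous_fst).prodMk continuous_snd)) continuous_snd
  have h2 : ∀ i, Continuous fun z => gI (Y z) (η i) := fun i => continuous_gI hY continuous_const
  fun_prop

theorem gI_le {y : ℝ → ℝ} (hy : Continuous y) (hy0 : ∀ s, 0 ≤ y s)
    {t : ℝ} (ht : t ∈ Icc (0:ℝ) 1) : gI y t ≤ gI y 1 :=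
  integral_mono_on zero_le_one (intervalIntegrable_gk hy _ _ _) (intervalIntegrable_gk hy _ _ _)
    fun s hs => mul_le_mul_of_nonneg_right (gk_le ht hs) (hy0 s)

theorem le_gI {y : ℝ → ℝ} (hy : Continuous y) (hy0 : ∀ s, 0 ≤ y s)
    {t : ℝ} (ht : t ∈ Icc (0:ℝ) 1) : t ^ 3 * gI y 1 ≤ gI y t := by
  unfold gI
  rw [← intervalIntegral.integral_const_mul]
  refine integral_mono_on zero_le_one ((intervalIntegrable_gk hy _ _ _).const_mul _)
    (intervalIntegrable_gk hy _ _ _) fun s hs => ?_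
  rw [← mul_assoc]
  exact mul_le_mul_of_nonneg_right (le_gk ht hs) (hy0 s)

theorem gI_one_nonneg {y : ℝ → ℝ} (hy0 : ∀ s, 0 ≤ y s) : 0 ≤ gI y 1 :=
  integral_nonneg zero_le_one fun s hs => mul_nonneg (gk_one_nonneg hs) (hy0 s)

theorem gI_nonneg {y : ℝ → ℝ} (hy : Continuous y) (hy0 : ∀ s, 0 ≤ y s)
    {t : ℝ} (ht : t ∈ Icc (0:ℝ) 1) : 0 ≤ gI y t :=
  (mul_nonneg (pow_nonneg ht.1 3) (gI_one_nonneg hy0)).trans (le_gI hy hy0 ht)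

theorem gI_zero (y : ℝ → ℝ) : gI y 0 = 0 := by
  unfold gI
  rw [integral_congr (g := fun _ => (0:ℝ)) fun s hs => ?_]
  · simp
  · rw [uIcc_of_le zero_le_one] at hs
    simp [gk, max_eq_right (by linarith [hs.1] : -s ≤ 0)]

theorem continuous_gI_self {y : ℝ → ℝ} (hy : Continuous y) : Continuous (gI y) :=
  continuous_gI (Y := fun _ => y) (hy.comp continuous_snd) continuous_id

theorem aI_nonneg {α k : ℝ} {n : ℕ} {β η : Fin n → ℝ} (hα : 0 ≤ α) (hβ : ∀ i, 0 ≤ β i)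
    (hη : ∀ i, η i ∈ Ioo (0:ℝ) 1) (hk0 : 0 < k)
    {y : ℝ → ℝ} (hy : Continuous y) (hy0 : ∀ s, 0 ≤ y s) : 0 ≤ aI α k β η y := by
  refine div_nonneg (add_nonneg (mul_nonneg hα ?_) (Finset.sum_nonneg fun i _ =>
    mul_nonneg (hβ i) (gI_nonneg hy hy0 (Ioo_subset_Icc_self (hη i))))) hk0.le
  exact integral_nonneg zero_le_one fun t ht => gI_nonneg hy hy0 ht

/-- An upper bound for `y` bounds the maximum of `opT y`: as `gI y ≤ k B`, the constant term is at most
`(1 - k) B`. -/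
theorem opT_one_le {α k : ℝ} {n : ℕ} {β η : Fin n → ℝ} (hα : 0 ≤ α) (hβ : ∀ i, 0 ≤ β i)
    (hη : ∀ i, η i ∈ Ioo (0:ℝ) 1) (hk : k = 1 - (α + ∑ i, β i)) (hk0 : 0 < k)
    {y : ℝ → ℝ} (hy : Continuous y) (hy0 : ∀ s, 0 ≤ y s)
    {B : ℝ} (hB : ∀ s ∈ Ioo (0:ℝ) 1, y s ≤ k * B) : opT α k β η y 1 ≤ B := by
  have h1 : gI y 1 ≤ k * B := by
    have h0 := integral_mono_on_of_le_Ioo (zero_le_one (α := ℝ)) (intervalIntegrable_gk hy 1 0 1)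
      (intervalIntegrable_const (c := k * B) (μ := MeasureTheory.volume)) (fun s hs => by
      refine le_trans ?_ (hB s hs)
      exact mul_le_of_le_one_left (hy0 s) (gk_one_le (Ioo_subset_Icc_self hs)))
    simpa [gI] using h0
  have h2 : ∫ t in (0:ℝ)..1, gI y t ≤ gI y 1 := by
    have := integral_mono_on (zero_le_one (α := ℝ))
      ((continuous_gI_self hy).intervalIntegrable (μ := MeasureTheory.volume) 0 1)
      (intervalIntegrable_const (c := gI y 1) (μ := MeasureTheory.volume))
      (fun t ht => gI_le hy hy0 ht)
    simpa using this
  have h3 : ∑ i, β i * gI y (η i) ≤ (∑ i, β i) * gI y 1 := by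
    rw [Finset.sum_mul]
    exact Finset.sum_le_sum fun i _ =>
      mul_le_mul_of_nonneg_left (gI_le hy hy0 (Ioo_subset_Icc_self (hη i))) (hβ i)
  have h4 : aI α k β η y ≤ (1 - k) * gI y 1 / k := by
    refine div_le_div_of_nonneg_right ?_ hk0.le
    have := mul_le_mul_of_nonneg_left h2 hα
    rw [hk]
    linarith
  have h5 : gI y 1 + (1 - k) * gI y 1 / k = gI y 1 / k := by field_simp; ring
  have h6 : gI y 1 / k ≤ B := by rw [div_le_iff₀ hk0]; linarith
  unfold opT
  linarith

/-- A lower bound `M s³ - B` for `y` bounds `opT y 1` from below; `1/630` and `1/72` are the integrals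
of `g(1,s) s³` and of `g(1,s)`. -/
theorem le_opT_one {α k : ℝ} {n : ℕ} {β η : Fin n → ℝ} (hα : 0 ≤ α) (hβ : ∀ i, 0 ≤ β i)
    (hη : ∀ i, η i ∈ Ioo (0:ℝ) 1) (hk0 : 0 < k)
    {y : ℝ → ℝ} (hy : Continuous y) (hy0 : ∀ s, 0 ≤ y s)
    {M B : ℝ} (hB : ∀ s ∈ Ioo (0:ℝ) 1, M * s ^ 3 - B ≤ y s) :
    M / 630 - B / 72 ≤ opT α k β η y 1 := by
  have h0 := integral_mono_on_of_le_Ioo (zero_le_one (α := ℝ))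
      (f := fun s => s * (1 - s) ^ 2 / 6 * (M * s ^ 3 - B))
      (Continuous.intervalIntegrable (by fun_prop) 0 1)
      (intervalIntegrable_gk hy 1 0 1) (fun s hs => by
      rw [← gk_one (Ioo_subset_Icc_self hs)]
      exact mul_le_mul_of_nonneg_left (hB s hs) (gk_one_nonneg (Ioo_subset_Icc_self hs)))
  have h1 : ∫ s in (0:ℝ)..1, s * (1 - s) ^ 2 / 6 * (M * s ^ 3 - B) = M / 630 - B / 72 := by
    have hd : ∀ s ∈ uIcc (0:ℝ) 1, HasDerivAt (fun s : ℝ =>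
        M / 6 * (s ^ 5 / 5 - 2 * s ^ 6 / 6 + s ^ 7 / 7)
        - B / 6 * (s ^ 2 / 2 - 2 * s ^ 3 / 3 + s ^ 4 / 4))
        (s * (1 - s) ^ 2 / 6 * (M * s ^ 3 - B)) s := by
      intro s _
      have h := fun m : ℕ => hasDerivAt_pow m s
      refine ((((((h 5).div_const 5).sub (((h 6).const_mul 2).div_const 6)).add
        ((h 7).div_const 7)).const_mul (M / 6)).sub
        (((((h 2).div_const 2).sub (((h 3).const_mul 2).div_const 3)).add
        ((h 4).div_const 4)).const_mul (B / 6))).congr_deriv ?_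
      norm_num
      ring
    rw [integral_eq_sub_of_hasDerivAt hd (Continuous.intervalIntegrable (by fun_prop) 0 1)]
    norm_num
    ring
  rw [h1] at h0
  have := aI_nonneg hα hβ hη hk0 hy hy0 (β := β)
  unfold opT gI
  linarith

/-- Expanding `(t - s)³` expresses `gI y` through integrals `∫₀ᵗ sʲ y(s) ds`, which can be
differentiated in `t` termwise. -/
theorem gI_eq_moments {y : ℝ → ℝ} (hy : Continuous y) {t : ℝ} (ht : t ∈ Icc (0:ℝ) 1) :
    gI y t = t ^ 3 / 6 * (∫ s in (0:ℝ)..1, (1 - s) ^ 2 * y s)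
      - (t ^ 3 * (∫ s in (0:ℝ)..t, y s) - 3 * t ^ 2 * (∫ s in (0:ℝ)..t, s * y s)
        + 3 * t * (∫ s in (0:ℝ)..t, s ^ 2 * y s) - ∫ s in (0:ℝ)..t, s ^ 3 * y s) / 6 := by
  have hi : ∀ {g : ℝ → ℝ} (_ : Continuous g) (a b : ℝ),
      IntervalIntegrable g MeasureTheory.volume a b := fun hg a b => hg.intervalIntegrable a b
  have e1 : ∫ s in (0:ℝ)..1, max (t - s) 0 ^ 3 * y s = ∫ s in (0:ℝ)..t, (t - s) ^ 3 * y s := by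
    rw [← integral_add_adjacent_intervals (hi (by fun_prop) 0 t) (hi (by fun_prop) t 1)]
    have z : ∫ s in t..1, max (t - s) 0 ^ 3 * y s = 0 := by
      rw [integral_congr (g := fun _ => (0:ℝ)) fun s hs => ?_]
      · simp
      · rw [uIcc_of_le ht.2] at hs
        simp [max_eq_right (by linarith [hs.1] : t - s ≤ 0)]
    rw [z, add_zero]
    refine integral_congr fun s hs => ?_
    rw [uIcc_of_le ht.1] at hs
    simp only [max_eq_left (by linarith [hs.2] : 0 ≤ t - s)]
  have e2 : ∫ s in (0:ℝ)..t, (t - s) ^ 3 * y s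
      = t ^ 3 * (∫ s in (0:ℝ)..t, y s) - 3 * t ^ 2 * (∫ s in (0:ℝ)..t, s * y s)
        + 3 * t * (∫ s in (0:ℝ)..t, s ^ 2 * y s) - ∫ s in (0:ℝ)..t, s ^ 3 * y s := by
    simp only [← intervalIntegral.integral_const_mul]
    rw [← integral_sub (hi (by fun_prop) _ _) (hi (by fun_prop) _ _),
      ← integral_add (hi (by fun_prop) _ _) (hi (by fun_prop) _ _),
      ← integral_sub (hi (by fun_prop) _ _) (hi (by fun_prop) _ _)]
    exact integral_congr fun s _ => by ring
  rw [← e2, ← e1, ← intervalIntegral.integral_const_mul, ← intervalIntegral.integral_div,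
    ← integral_sub (hi (by fun_prop) _ _) (hi (by fun_prop) _ _)]
  exact integral_congr fun s _ => by simp only [gk]; ring

/-- `opT y` coincides on `[0,1]` with a function on the line that solves the boundary value problem. The
extension beyond `[0,1]` gives the two-sided derivatives at the endpoints their intended value. -/
theorem exists_solution {α k : ℝ} {n : ℕ} {β η : Fin n → ℝ}
    (hη : ∀ i, η i ∈ Ioo (0:ℝ) 1) (hk : k = 1 - (α + ∑ i, β i)) (hk0 : 0 < k)
    {y : ℝ → ℝ} (hy : Continuous y) :
    ∃ u : ℝ → ℝ, (∀ t ∈ Icc (0:ℝ) 1, u t = opT α k β η y t) ∧ Continuous u ∧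
      (∀ t, iteratedDeriv 4 u t = - y t) ∧
      deriv u 0 = 0 ∧ deriv u 1 = 0 ∧ deriv (deriv u) 0 = 0 ∧
      u 0 = α * (∫ s in (0:ℝ)..1, u s) + ∑ i, β i * u (η i) := by
  let m := ∫ s in (0:ℝ)..1, (1 - s) ^ 2 * y s
  let J : ℕ → ℝ → ℝ := fun j t => ∫ s in (0:ℝ)..t, s ^ j * y s
  let a := aI α k β η y
  have hJ : ∀ j t, HasDerivAt (J j) (t ^ j * y t) t := fun j t => by
    have hc : Continuous fun s => s ^ j * y s := by fun_prop
    exact integral_hasDerivAt_right (hc.intervalIntegrable _ _)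
      (hc.stronglyMeasurableAtFilter _ _) hc.continuousAt
  let u : ℝ → ℝ := fun t => a + (t ^ 3 / 6 * m
      - (t ^ 3 * J 0 t - 3 * t ^ 2 * J 1 t + 3 * t * J 2 t - J 3 t) / 6)
  let u1 : ℝ → ℝ := fun t => t ^ 2 / 2 * m - (t ^ 2 * J 0 t - 2 * t * J 1 t + J 2 t) / 2
  let u2 : ℝ → ℝ := fun t => t * m - (t * J 0 t - J 1 t)
  let u3 : ℝ → ℝ := fun t => m - J 0 t
  have d0 : ∀ t, HasDerivAt u (u1 t) t := by
    intro t
    have h := fun m : ℕ => hasDerivAt_pow m t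
    refine (((((h 3).div_const 6).mul_const m).sub ((((((h 3).mul (hJ 0 t)).sub
      (((h 2).const_mul 3).mul (hJ 1 t))).add (((hasDerivAt_id' t).const_mul 3).mul (hJ 2 t))).sub
      (hJ 3 t)).div_const 6)).const_add a).congr_deriv ?_
    simp only [u1]
    norm_num
    ring
  have d1 : ∀ t, HasDerivAt u1 (u2 t) t := by
    intro t
    have h := fun m : ℕ => hasDerivAt_pow m t
    refine ((((h 2).div_const 2).mul_const m).sub (((((h 2).mul (hJ 0 t)).sub
      (((hasDerivAt_id' t).const_mul 2).mul (hJ 1 t))).add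
      (hJ 2 t)).div_const 2)).congr_deriv ?_
    simp only [u2]
    norm_num
    ring
  have d2 : ∀ t, HasDerivAt u2 (u3 t) t := by
    intro t
    refine (((hasDerivAt_id' t).mul_const m).sub
      (((hasDerivAt_id' t).mul (hJ 0 t)).sub (hJ 1 t))).congr_deriv ?_
    simp only [u3]
    ring
  have d3 : ∀ t, HasDerivAt u3 (-y t) t := by
    intro t
    refine ((hJ 0 t).const_sub m).congr_deriv ?_
    ring
  have D0 : deriv u = u1 := funext fun t => (d0 t).deriv
  have D1 : deriv u1 = u2 := funext fun t => (d1 t).deriv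
  have D2 : deriv u2 = u3 := funext fun t => (d2 t).deriv
  have D3 : deriv u3 = fun t => -y t := funext fun t => (d3 t).deriv
  have hJ0 : ∀ j, J j 0 = 0 := fun j => integral_same
  have huc : Continuous u := continuous_iff_continuousAt.2 fun t => (d0 t).continuousAt
  have hu : ∀ t ∈ Icc (0:ℝ) 1, u t = opT α k β η y t := by
    intro t ht
    unfold opT
    rw [gI_eq_moments hy ht, add_comm]
    simp only [u, J, pow_zero, one_mul, pow_one]
    rfl
  refine ⟨u, hu, huc, fun t => ?_, ?_, ?_, ?_, ?_⟩
  · simp only [iteratedDeriv_succ, iteratedDeriv_zero, D0, D1, D2, D3]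
  · rw [D0]; simp [u1, hJ0]
  · rw [D0]
    have hi : ∀ {g : ℝ → ℝ} (_ : Continuous g),
      IntervalIntegrable g MeasureTheory.volume 0 1 := fun hg => hg.intervalIntegrable 0 1
    have : m = J 0 1 - 2 * J 1 1 + J 2 1 := by
      simp only [m, J, ← intervalIntegral.integral_const_mul]
      rw [← integral_sub (hi (by fun_prop)) (hi (by fun_prop)),
        ← integral_add (hi (by fun_prop)) (hi (by fun_prop))]
      exact integral_congr fun s _ => by ring
    simp only [u1, this]
    ring
  · rw [D0, D1]; simp [u2, hJ0]
  · have h1 : ∫ s in (0:ℝ)..1, u s = (∫ s in (0:ℝ)..1, gI y s) + a := by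
      rw [integral_congr (g := fun s => gI y s + a) fun s hs => by
        rw [uIcc_of_le zero_le_one] at hs; exact hu s hs]
      rw [integral_add ((continuous_gI_self hy).intervalIntegrable 0 1) intervalIntegrable_const]
      simp
    have h2 : ∑ i, β i * u (η i) = ∑ i, β i * gI y (η i) + (∑ i, β i) * a := by
      rw [Finset.sum_mul, ← Finset.sum_add_distrib]
      refine Finset.sum_congr rfl fun i _ => ?_
      rw [hu _ (Ioo_subset_Icc_self (hη i)), opT]
      ring
    have h3 : a * k = α * (∫ t in (0:ℝ)..1, gI y t) + ∑ i, β i * gI y (η i) :=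
      div_mul_cancel₀ _ hk0.ne'
    rw [hu 0 (by simp), opT, gI_zero, h1, h2]
    change 0 + a = _
    rw [hk] at h3
    linear_combination h3

/-! ### Fixed points in terms of amplitude and profile -/

theorem gI_lipschitz {y : ℝ → ℝ} (hy : Continuous y) {B : ℝ}
    (hB : ∀ s ∈ Icc (0:ℝ) 1, |y s| ≤ B) {t t' : ℝ} (ht : t ∈ Icc (0:ℝ) 1)
    (ht' : t' ∈ Icc (0:ℝ) 1) : |gI y t - gI y t'| ≤ B * |t - t'| := by
  unfold gI
  rw [← integral_sub (intervalIntegrable_gk hy _ _ _) (intervalIntegrable_gk hy _ _ _)]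
  have := norm_integral_le_of_norm_le_const (a := (0:ℝ)) (b := 1) (C := B * |t - t'|)
    (f := fun s => gk t s * y s - gk t' s * y s) (fun s hs => by
      rw [uIoc_of_le zero_le_one] at hs
      have hs := Ioc_subset_Icc_self hs
      rw [← sub_mul, norm_mul, mul_comm]
      exact mul_le_mul (hB s hs) (gk_lipschitz ht ht' hs) (norm_nonneg _)
        ((abs_nonneg _).trans (hB s hs)))
  simpa using this

/-- Functions `w` on `[0,1]` with `t³ ≤ w t ≤ 1` and Lipschitz constant `L`. -/
def profiles (L : ℝ) : Set C(Icc (0:ℝ) 1, ℝ) :=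
  {w | (∀ t : Icc (0:ℝ) 1, (t:ℝ) ^ 3 ≤ w t ∧ w t ≤ 1) ∧
    ∀ t t' : Icc (0:ℝ) 1, |w t - w t'| ≤ L * |(t:ℝ) - t'|}

theorem convex_profiles (L : ℝ) : Convex ℝ (profiles L) := by
  rintro v ⟨hv1, hv2⟩ w ⟨hw1, hw2⟩ a b ha hb hab
  refine ⟨fun t => ?_, fun t t' => ?_⟩
  · have h1 := hv1 t
    have h2 := hw1 t
    simp only [ContinuousMap.add_apply, ContinuousMap.smul_apply, smul_eq_mul]
    have hb' : b = 1 - a := by linarith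
    subst hb'
    constructor <;> nlinarith
  · have h1 := mul_le_mul_of_nonneg_left (hv2 t t') ha
    have h2 := mul_le_mul_of_nonneg_left (hw2 t t') hb
    simp only [ContinuousMap.add_apply, ContinuousMap.smul_apply, smul_eq_mul]
    have h3 : a * v t + b * w t - (a * v t' + b * w t')
        = a * (v t - v t') + b * (w t - w t') := by ring
    rw [h3]
    refine (abs_add_le _ _).trans ?_
    rw [abs_mul, abs_mul, abs_of_nonneg ha, abs_of_nonneg hb]
    refine (add_le_add h1 h2).trans_eq ?_
    rw [← add_mul, hab, one_mul]

theorem isCompact_profiles {L : ℝ} (hL : 0 ≤ L) : IsCompact (profiles L) := by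
  have hlip : ∀ g : Icc (0:ℝ) 1 → ℝ, (∀ t t', |g t - g t'| ≤ L * |(t:ℝ) - t'|) →
      LipschitzWith ⟨L, hL⟩ g := fun g hg => LipschitzWith.of_dist_le_mul hg
  refine ArzelaAscoli.isCompact_of_equicontinuous _ ?_ ?_
  · have himg : ContinuousMap.toFun '' profiles L =
        (Set.pi univ fun t : Icc (0:ℝ) 1 => Icc ((t:ℝ) ^ 3) 1) ∩
          {g | ∀ t t', |g t - g t'| ≤ L * |(t:ℝ) - t'|} := by
      ext g
      constructor
      · rintro ⟨w, hw, rfl⟩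
        exact ⟨fun t _ => hw.1 t, hw.2⟩
      · rintro ⟨h1, h2⟩
        exact ⟨⟨g, (hlip g h2).continuous⟩, ⟨fun t => h1 t trivial, h2⟩, rfl⟩
    rw [himg]
    refine (isCompact_univ_pi fun t => isCompact_Icc).inter_right ?_
    simp only [Set.ofPred_forall]
    refine isClosed_iInter fun t => isClosed_iInter fun t' => ?_
    exact isClosed_le (by fun_prop) continuous_const
  · refine Metric.equicontinuous_of_continuity_modulus (fun x => L * x) ?_ _ ?_
    · exact Continuous.tendsto' (by fun_prop) _ _ (by simp)
    · rintro t t' ⟨w, hw⟩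
      exact hw.2 t t'

theorem continuous_opT {Z : Type*} [TopologicalSpace Z] [FirstCountableTopology Z]
    (α k : ℝ) {n : ℕ} (β η : Fin n → ℝ)
    {Y : Z → ℝ → ℝ} (hY : Continuous fun p : Z × ℝ => Y p.1 p.2) :
    Continuous fun p : Z × ℝ => opT α k β η (Y p.1) p.2 := by
  have h1 : Continuous fun p : Z × ℝ => gI (Y p.1) p.2 :=
    continuous_gI (Z := Z × ℝ) (Y := fun p => Y p.1) (τ := Prod.snd)
      (hY.comp ((continuous_fst.comp continuous_fst).prodMk continuous_snd)) continuous_snd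
  exact h1.add ((continuous_aI α k β η hY).comp continuous_fst)

/-- The normalized profile `A z / A z 1` of a continuous family, modified where `A z 1 < r`: the
denominator is kept at least `r`, and a constant is added so that the value at `1` is `1`. -/
theorem exists_normalization {Z : Type*} [TopologicalSpace Z] {A : Z → ℝ → ℝ}
    (hA : Continuous fun p : Z × ℝ => A p.1 p.2) {r : ℝ} (hr : 0 < r) :
    ∃ W : Z → C(Icc (0:ℝ) 1, ℝ), Continuous W ∧
      ∀ z t, W z t = (A z t + max 0 (r - A z 1)) / max (A z 1) r := by
  have hmax : ∀ z, max (A z 1) r ≠ 0 := fun z => (lt_max_of_lt_right hr).ne'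
  have h1 : Continuous fun p : Z × Icc (0:ℝ) 1 => A p.1 p.2 :=
    hA.comp (continuous_fst.prodMk (continuous_subtype_val.comp continuous_snd))
  have h2 : Continuous fun p : Z × Icc (0:ℝ) 1 => A p.1 1 :=
    hA.comp (continuous_fst.prodMk continuous_const)
  have h3 : Continuous fun p : Z × Icc (0:ℝ) 1 =>
      (A p.1 p.2 + max 0 (r - A p.1 1)) / max (A p.1 1) r :=
    (h1.add (continuous_const.max (continuous_const.sub h2))).div
      (h2.max continuous_const) fun p => hmax _
  refine ⟨fun z => ⟨fun t => (A z t + max 0 (r - A z 1)) / max (A z 1) r,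
    h3.comp (continuous_const.prodMk continuous_id)⟩, ?_, fun z t => rfl⟩
  exact ContinuousMap.continuous_of_continuous_uncurry _ h3

/-- If the amplitude `N(c,w) = opT (F(·, c w)) 1` expands at `c = r` and contracts at `c = R`
uniformly over profiles `w`, or conversely, then `v ↦ opT (F(·, v))` has a fixed point above `r t³`. -/
theorem exists_fixedPoint_opT {α k : ℝ} {n : ℕ} {β η : Fin n → ℝ} (hα : 0 ≤ α) (hβ : ∀ i, 0 ≤ β i)
    (hη : ∀ i, η i ∈ Ioo (0:ℝ) 1) (hk0 : 0 < k)
    {F : ℝ → ℝ → ℝ} (hF : Continuous (Function.uncurry F)) (hF0 : ∀ s x, 0 ≤ F s x)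
    {r R : ℝ} (hr : 0 < r) (hrR : r ≤ R)
    (hN : (∀ w : ℝ → ℝ, Continuous w → (∀ t ∈ Icc (0:ℝ) 1, t ^ 3 ≤ w t ∧ w t ≤ 1) →
        r ≤ opT α k β η (fun s => F s (r * w s)) 1 ∧ opT α k β η (fun s => F s (R * w s)) 1 ≤ R) ∨
      (∀ w : ℝ → ℝ, Continuous w → (∀ t ∈ Icc (0:ℝ) 1, t ^ 3 ≤ w t ∧ w t ≤ 1) →
        opT α k β η (fun s => F s (r * w s)) 1 ≤ r ∧ R ≤ opT α k β η (fun s => F s (R * w s)) 1)) :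
    ∃ v : ℝ → ℝ, Continuous v ∧ (∀ t ∈ Icc (0:ℝ) 1, r * t ^ 3 ≤ v t) ∧
      ∀ t ∈ Icc (0:ℝ) 1, v t = opT α k β η (fun s => F s (v s)) t := by
  -- `ext w` is the extension of `w` to the line that is constant on both sides of `[0,1]`
  obtain ⟨ext, hextd⟩ : ∃ ext : C(Icc (0:ℝ) 1, ℝ) → ℝ → ℝ,
      ∀ w s, ext w s = w (projIcc 0 1 zero_le_one s) := ⟨_, fun _ _ => rfl⟩
  have hext : Continuous fun p : C(Icc (0:ℝ) 1, ℝ) × ℝ => ext p.1 p.2 := by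
    simp only [hextd]
    exact continuous_fst.eval (continuous_projIcc.comp continuous_snd)
  have hext1 : ∀ w, Continuous (ext w) := fun w =>
    hext.comp (continuous_const.prodMk continuous_id)
  have hexteq : ∀ w (t : Icc (0:ℝ) 1), ext w t = w t := fun w t => by simp [hextd]
  obtain ⟨Y, hYd⟩ : ∃ Y : ℝ × C(Icc (0:ℝ) 1, ℝ) → ℝ → ℝ,
      ∀ z, Y z = fun s => F s (z.1 * ext z.2 s) := ⟨_, fun _ => rfl⟩
  have hY : Continuous fun p : (ℝ × C(Icc (0:ℝ) 1, ℝ)) × ℝ => Y p.1 p.2 := by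
    simp only [hYd]
    refine hF.comp (continuous_snd.prodMk ((continuous_fst.comp continuous_fst).mul ?_))
    exact hext.comp ((continuous_snd.comp continuous_fst).prodMk continuous_snd)
  have hY1 : ∀ z, Continuous (Y z) := fun z => hY.comp (continuous_const.prodMk continuous_id)
  have hY0 : ∀ z s, 0 ≤ Y z s := fun z s => by rw [hYd]; exact hF0 _ _
  obtain ⟨A, hAd⟩ : ∃ A : ℝ × C(Icc (0:ℝ) 1, ℝ) → ℝ → ℝ,
      ∀ z t, A z t = opT α k β η (Y z) t := ⟨_, fun _ _ => rfl⟩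
  have hA : Continuous fun p : (ℝ × C(Icc (0:ℝ) 1, ℝ)) × ℝ => A p.1 p.2 := by
    simp only [hAd]
    exact continuous_opT α k β η hY
  have hNc : Continuous fun z => A z 1 := hA.comp (continuous_id.prodMk continuous_const)
  have hmax : ∀ z, 0 < max (A z 1) r := fun z => lt_max_of_lt_right hr
  obtain ⟨W, hW, hWd⟩ := exists_normalization hA hr
  obtain ⟨B, hB⟩ := ((isCompact_Icc (a := (0:ℝ)) (b := 1)).prod
    (isCompact_Icc (a := (0:ℝ)) (b := R))).exists_bound_of_continuousOn hF.continuousOn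
  have hB0 : 0 ≤ B := (norm_nonneg _).trans
    (hB (0, 0) ⟨⟨le_rfl, zero_le_one⟩, ⟨le_rfl, hr.le.trans hrR⟩⟩)
  set L := B / r with hL
  have hL0 : 0 ≤ L := by positivity
  have hbd : ∀ w ∈ profiles L, ∀ t ∈ Icc (0:ℝ) 1, t ^ 3 ≤ ext w t ∧ ext w t ≤ 1 := by
    intro w hw t ht
    have := hw.1 ⟨t, ht⟩
    rwa [← hexteq] at this
  have hWm : ∀ z ∈ Icc r R ×ˢ profiles L, W z ∈ profiles L := by
    rintro z ⟨hz1, hz2⟩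
    have hN0 : A z 1 + max 0 (r - A z 1) = max (A z 1) r := by
      rcases le_total (A z 1) r with h | h
      · rw [max_eq_right (by linarith), max_eq_right h]; ring
      · rw [max_eq_left (by linarith), max_eq_left h]; ring
    have ha := aI_nonneg hα hβ hη hk0 (hY1 z) (hY0 z) (β := β)
    refine ⟨fun t => ⟨?_, ?_⟩, fun t t' => ?_⟩
    · rw [hWd, le_div_iff₀ (hmax z), ← hN0]
      have h1 := le_gI (hY1 z) (hY0 z) t.2
      have h2 : (t:ℝ) ^ 3 ≤ 1 := pow_le_one₀ t.2.1 t.2.2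
      have h3 : (t:ℝ) ^ 3 * A z 1 ≤ A z t := by
        simp only [hAd, opT]
        nlinarith
      nlinarith [le_max_left 0 (r - A z 1)]
    · rw [hWd, div_le_one (hmax z), ← hN0]
      have h1 := gI_le (hY1 z) (hY0 z) t.2
      simp only [hAd, opT]
      linarith
    · rw [hWd, hWd, ← sub_div, add_sub_add_right_eq_sub, abs_div, abs_of_pos (hmax z), div_le_iff₀ (hmax z)]
      have h1 : |A z t - A z t'| ≤ B * |(t:ℝ) - t'| := by
        simp only [hAd, opT, add_sub_add_right_eq_sub]
        refine gI_lipschitz (hY1 z) (fun s hs => ?_) t.2 t'.2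
        have h2 := hbd _ hz2 s hs
        have h0 : 0 ≤ ext z.2 s := (pow_nonneg hs.1 3).trans h2.1
        have hz0 : 0 ≤ z.1 := hr.le.trans hz1.1
        rw [hYd]
        exact hB (s, z.1 * ext z.2 s) ⟨hs, mul_nonneg hz0 h0,
          (mul_le_of_le_one_right hz0 h2.2).trans hz1.2⟩
      refine h1.trans ?_
      have h2 : B = L * r := by rw [hL, div_mul_cancel₀ _ hr.ne']
      have h3 : B ≤ L * max (A z 1) r := by
        rw [h2]; exact mul_le_mul_of_nonneg_left (le_max_right _ _) hL0
      calc B * |(t:ℝ) - t'| ≤ L * max (A z 1) r * |(t:ℝ) - t'| :=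
            mul_le_mul_of_nonneg_right h3 (abs_nonneg _)
        _ = _ := by ring
  have hconv : Convex ℝ (Icc r R ×ˢ profiles L) := (convex_Icc r R).prod (convex_profiles L)
  have hcomp : IsCompact (Icc r R ×ˢ profiles L) := isCompact_Icc.prod (isCompact_profiles hL0)
  have hne : (Icc r R ×ˢ profiles L).Nonempty := by
    refine ⟨(r, ContinuousMap.const _ 1), ⟨le_rfl, hrR⟩, fun t => ⟨?_, le_rfl⟩, fun t t' => ?_⟩
    · exact pow_le_one₀ t.2.1 t.2.2
    · simp only [ContinuousMap.const_apply, sub_self, abs_zero]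
      positivity
  -- a fixed profile at amplitude `A z 1 = z.1` is a fixed point of the integral operator
  have finish : ∀ z ∈ Icc r R ×ˢ profiles L, W z = z.2 → A z 1 = z.1 →
      ∃ v : ℝ → ℝ, Continuous v ∧ (∀ t ∈ Icc (0:ℝ) 1, r * t ^ 3 ≤ v t) ∧
      ∀ t ∈ Icc (0:ℝ) 1, v t = opT α k β η (fun s => F s (v s)) t := by
    rintro z ⟨hz1, hz2⟩ hWz hNz
    refine ⟨fun s => z.1 * ext z.2 s, by have := hext1 z.2; fun_prop, fun t ht => ?_,
      fun t ht => ?_⟩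
    · exact mul_le_mul hz1.1 (hbd _ hz2 t ht).1 (pow_nonneg ht.1 3) (hr.le.trans hz1.1)
    · have h1 : ext z.2 t = W z ⟨t, ht⟩ := by rw [hWz]; exact hexteq z.2 ⟨t, ht⟩
      have h2 : W z ⟨t, ht⟩ = (A z t + max 0 (r - A z 1)) / max (A z 1) r := hWd z ⟨t, ht⟩
      have h3 := hz1.1
      have hz0 : z.1 ≠ 0 := (hr.trans_le h3).ne'
      simp only
      rw [h1, h2, hNz, max_eq_left h3, max_eq_left (by linarith), add_zero, mul_div_cancel₀ _ hz0, hAd, hYd]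
  rcases hN with hN | hN
  · obtain ⟨z, hz, hfix⟩ := schauder hconv hcomp hne
      (fun z => (max r (min (A z 1) R), W z)) ((continuous_const.max
        (hNc.min continuous_const)).prodMk hW).continuousOn
      (fun z hz => ⟨⟨le_max_left _ _, max_le hrR (min_le_right _ _)⟩, hWm z hz⟩)
    obtain ⟨h1, h2⟩ := Prod.ext_iff.1 hfix
    refine finish z hz h2 ?_
    simp only at h1
    have hb := hN _ (hext1 z.2) (hbd _ hz.2)
    have hz1 := hz.1
    rcases le_or_gt (A z 1) R with h | h
    · rw [min_eq_left h] at h1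
      rcases le_or_gt r (A z 1) with h' | h'
      · rwa [max_eq_right h'] at h1
      · rw [max_eq_left h'.le] at h1
        have : r ≤ A z 1 := by simpa only [hAd, hYd, h1] using hb.1
        linarith
    · rw [min_eq_right h.le, max_eq_right hrR] at h1
      have : A z 1 ≤ R := by simpa only [hAd, hYd, h1] using hb.2
      linarith
  -- reflecting the amplitude, `c ↦ 2c - N(c,w)`, turns the second alternative into the first
  · obtain ⟨z, hz, hfix⟩ := schauder hconv hcomp hne
      (fun z => (max r (min (2 * z.1 - A z 1) R), W z)) ((continuous_const.max
        (((continuous_const.mul continuous_fst).sub hNc).min continuous_const)).prodMk hW).continuousOn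
      (fun z hz => ⟨⟨le_max_left _ _, max_le hrR (min_le_right _ _)⟩, hWm z hz⟩)
    obtain ⟨h1, h2⟩ := Prod.ext_iff.1 hfix
    refine finish z hz h2 ?_
    simp only at h1
    have hb := hN _ (hext1 z.2) (hbd _ hz.2)
    rcases le_or_gt (2 * z.1 - A z 1) R with h | h
    · rw [min_eq_left h] at h1
      rcases le_or_gt r (2 * z.1 - A z 1) with h' | h'
      · rw [max_eq_right h'] at h1; linarith
      · rw [max_eq_left h'.le] at h1
        have : A z 1 ≤ r := by simpa only [hAd, hYd, h1] using hb.1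
        linarith
    · rw [min_eq_right h.le, max_eq_right hrR] at h1
      have : R ≤ A z 1 := by simpa only [hAd, hYd, h1] using hb.2
      linarith

/-! ### Verification of the growth conditions -/

/-- The value of a quotient `f t x / x` lies between the infimum and the supremum over `t`. -/
theorem quotient_mem_Icc {f : ℝ → ℝ → ℝ}
    (hf : ContinuousOn (fun p : ℝ × ℝ => f p.1 p.2) (Icc 0 1 ×ˢ Ici 0))
    {x : ℝ} (hx : 0 < x) {t : ℝ} (ht : t ∈ Icc (0:ℝ) 1) :
    f t x / x ∈ Icc (sInf ((fun t => f t x / x) '' Icc (0:ℝ) 1))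
      (sSup ((fun t => f t x / x) '' Icc (0:ℝ) 1)) := by
  have hc : ContinuousOn (fun t => f t x / x) (Icc (0:ℝ) 1) := by
    refine ContinuousOn.div_const ?_ x
    exact hf.comp (f := fun t => (t, x)) (by fun_prop) fun t ht => ⟨ht, hx.le⟩
  have hK := isCompact_Icc.image_of_continuousOn hc
  exact ⟨csInf_le hK.bddBelow (mem_image_of_mem _ ht), le_csSup hK.bddAbove (mem_image_of_mem _ ht)⟩

theorem stmt19 (n : ℕ) (α : ℝ) (β η : Fin n → ℝ)
    (hα : 0 ≤ α) (hβ : ∀ i, 0 ≤ β i)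
    (hηmono : StrictMono η) (hη : ∀ i, η i ∈ Set.Ioo (0:ℝ) 1)
    (k : ℝ) (hk : k = 1 - (α + ∑ i, β i)) (hk0 : 0 < k)
    (f : ℝ → ℝ → ℝ)
    (hf : ContinuousOn (fun p : ℝ × ℝ => f p.1 p.2) (Set.Icc 0 1 ×ˢ Set.Ici 0))
    (hfnn : ∀ t ∈ Set.Icc (0:ℝ) 1, ∀ x ∈ Set.Ici (0:ℝ), 0 ≤ f t x)
    (hlim :
      (Filter.Tendsto (fun x : ℝ => sInf ((fun t => f t x / x) '' Set.Icc (0:ℝ) 1))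
          (nhdsWithin 0 (Set.Ioi 0)) Filter.atTop ∧
        Filter.Tendsto (fun x : ℝ => sSup ((fun t => f t x / x) '' Set.Icc (0:ℝ) 1))
          Filter.atTop (nhds 0)) ∨
      (Filter.Tendsto (fun x : ℝ => sSup ((fun t => f t x / x) '' Set.Icc (0:ℝ) 1))
          (nhdsWithin 0 (Set.Ioi 0)) (nhds 0) ∧
        Filter.Tendsto (fun x : ℝ => sInf ((fun t => f t x / x) '' Set.Icc (0:ℝ) 1))
          Filter.atTop Filter.atTop)) :
    ∃ u : ℝ → ℝ, ContinuousOn u (Set.Icc 0 1) ∧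
      (∀ t ∈ Set.Ioo (0:ℝ) 1, 0 < u t) ∧
      (∀ t ∈ Set.Ioo (0:ℝ) 1, iteratedDeriv 4 u t + f t (u t) = 0) ∧
      deriv u 0 = 0 ∧ deriv u 1 = 0 ∧ deriv (deriv u) 0 = 0 ∧
      u 0 = α * (∫ s in (0:ℝ)..1, u s) + ∑ i, β i * u (η i) := by
  -- `F` extends `f` continuously to the plane, through the projection onto `[0,1] × [0,∞)`
  obtain ⟨F, hFd⟩ : ∃ F : ℝ → ℝ → ℝ, ∀ s x, F s x = f (projIcc 0 1 zero_le_one s) (max x 0) :=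
    ⟨_, fun _ _ => rfl⟩
  have hF : Continuous (Function.uncurry F) := by
    have : Function.uncurry F = fun p : ℝ × ℝ => f (projIcc 0 1 zero_le_one p.1) (max p.2 0) :=
      funext fun p => hFd _ _
    rw [this]
    exact hf.comp_continuous
      (f := fun p : ℝ × ℝ => (((projIcc 0 1 zero_le_one p.1 : Icc (0:ℝ) 1) : ℝ), max p.2 0))
      ((continuous_subtype_val.comp (continuous_projIcc.comp continuous_fst)).prodMk
        (continuous_snd.max continuous_const))
      fun p => ⟨Subtype.property _, mem_Ici.2 (le_max_right _ _)⟩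
  have hF0 : ∀ s x, 0 ≤ F s x := fun s x => by
    rw [hFd]; exact hfnn _ (Subtype.property _) _ (mem_Ici.2 (le_max_right _ _))
  have hFf : ∀ s ∈ Icc (0:ℝ) 1, ∀ x, 0 ≤ x → F s x = f s x := fun s hs x hx => by
    rw [hFd, projIcc_of_mem zero_le_one hs, max_eq_left hx]
  have hlow : ∀ c x, 0 < x → c ≤ sInf ((fun t => f t x / x) '' Icc (0:ℝ) 1) →
      ∀ s ∈ Icc (0:ℝ) 1, c * x ≤ F s x := fun c x hx h s hs => by
    rw [hFf s hs x hx.le, ← le_div_iff₀ hx]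
    exact h.trans (quotient_mem_Icc hf hx hs).1
  have hupp : ∀ c x, 0 < x → sSup ((fun t => f t x / x) '' Icc (0:ℝ) 1) ≤ c →
      ∀ s ∈ Icc (0:ℝ) 1, F s x ≤ c * x := fun c x hx h s hs => by
    rw [hFf s hs x hx.le, ← div_le_iff₀ hx]
    exact (quotient_mem_Icc hf hx hs).2.trans h
  have hFw : ∀ c : ℝ, ∀ w : ℝ → ℝ, Continuous w → Continuous fun s => F s (c * w s) :=
    fun c w hw => hF.comp (continuous_id.prodMk (continuous_const.mul hw))
  have key : ∃ r R : ℝ, 0 < r ∧ r ≤ R ∧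
      ((∀ w : ℝ → ℝ, Continuous w → (∀ t ∈ Icc (0:ℝ) 1, t ^ 3 ≤ w t ∧ w t ≤ 1) →
        r ≤ opT α k β η (fun s => F s (r * w s)) 1 ∧ opT α k β η (fun s => F s (R * w s)) 1 ≤ R) ∨
      (∀ w : ℝ → ℝ, Continuous w → (∀ t ∈ Icc (0:ℝ) 1, t ^ 3 ≤ w t ∧ w t ≤ 1) →
        opT α k β η (fun s => F s (r * w s)) 1 ≤ r ∧
          R ≤ opT α k β η (fun s => F s (R * w s)) 1)) := by
    rcases hlim with ⟨h0, hinf⟩ | ⟨h0, hinf⟩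
    -- sublinear case: slope at least `630` near `0`, and at most `k` near infinity
    · obtain ⟨r, hr, hr'⟩ := mem_nhdsGT_iff_exists_Ioc_subset.1 (h0.eventually_ge_atTop 630)
      have hr : 0 < r := hr
      obtain ⟨X, hX⟩ := eventually_atTop.1 (hinf.eventually_le_const hk0)
      obtain ⟨B, hB⟩ := ((isCompact_Icc (a := (0:ℝ)) (b := 1)).prod
        (isCompact_Icc (a := (0:ℝ)) (b := X))).exists_bound_of_continuousOn hF.continuousOn
      refine ⟨r, max r (B / k), hr, le_max_left _ _, Or.inl fun w hw hwb => ⟨?_, ?_⟩⟩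
      · have h1 := le_opT_one hα hβ hη hk0 (hFw r w hw) (fun s => hF0 _ _)
          (M := 630 * r) (B := 0) fun s hs => by
          have hs' := Ioo_subset_Icc_self hs
          have hw0 : 0 < w s := (pow_pos hs.1 3).trans_le (hwb s hs').1
          have h2 := hlow 630 (r * w s) (mul_pos hr hw0)
            (hr' ⟨mul_pos hr hw0, mul_le_of_le_one_right hr.le (hwb s hs').2⟩) s hs'
          have h3 := mul_le_mul_of_nonneg_left (hwb s hs').1 hr.le
          linarith
        linarith
      · set R := max r (B / k) with hR
        have hRr : r ≤ R := le_max_left _ _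
        have hR0 : 0 < R := hr.trans_le hRr
        have hRB : B ≤ k * R := by
          rw [← div_le_iff₀' hk0]; exact le_max_right _ _
        refine opT_one_le hα hβ hη hk hk0 (hFw R w hw) (fun s => hF0 _ _) fun s hs => ?_
        have hs' := Ioo_subset_Icc_self hs
        have hw0 : 0 < w s := (pow_pos hs.1 3).trans_le (hwb s hs').1
        have hRw := mul_le_of_le_one_right hR0.le (hwb s hs').2
        rcases le_total X (R * w s) with h | h
        · exact (hupp k _ (mul_pos hR0 hw0) (hX _ h) s hs').trans
            (mul_le_mul_of_nonneg_left hRw hk0.le)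
        · exact (le_abs_self _).trans ((hB (s, R * w s) ⟨hs', (mul_pos hR0 hw0).le, h⟩).trans hRB)
    -- superlinear case: slope at most `k` near `0`; with slope at least `1260` beyond `X` one has
    -- `F s x ≥ 1260 (x - X)`, hence `N(R,w) ≥ 2 R - (35/2) X`
    · obtain ⟨r, hr, hr'⟩ := mem_nhdsGT_iff_exists_Ioc_subset.1 (h0.eventually_le_const hk0)
      have hr : 0 < r := hr
      obtain ⟨X₁, hX₁⟩ := eventually_atTop.1 (hinf.eventually_ge_atTop 1260)
      obtain ⟨X, hX0, hX⟩ : ∃ X : ℝ, 0 ≤ X ∧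
          ∀ x ≥ X, 1260 ≤ sInf ((fun t => f t x / x) '' Icc (0:ℝ) 1) :=
        ⟨max 0 X₁, le_max_left _ _, fun x hx => hX₁ x ((le_max_right _ _).trans hx)⟩
      refine ⟨r, max r (35 / 2 * X), hr, le_max_left _ _, Or.inr fun w hw hwb => ⟨?_, ?_⟩⟩
      · refine opT_one_le hα hβ hη hk hk0 (hFw r w hw) (fun s => hF0 _ _) fun s hs => ?_
        have hs' := Ioo_subset_Icc_self hs
        have hw0 : 0 < w s := (pow_pos hs.1 3).trans_le (hwb s hs').1
        have hrw := mul_le_of_le_one_right hr.le (hwb s hs').2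
        exact (hupp k _ (mul_pos hr hw0) (hr' ⟨mul_pos hr hw0, hrw⟩) s hs').trans
          (mul_le_mul_of_nonneg_left hrw hk0.le)
      · set R := max r (35 / 2 * X) with hR
        have hRr : r ≤ R := le_max_left _ _
        have hR0 : 0 < R := hr.trans_le hRr
        have hRX : 35 / 2 * X ≤ R := le_max_right _ _
        have h1 := le_opT_one hα hβ hη hk0 (hFw R w hw) (fun s => hF0 _ _)
          (M := 1260 * R) (B := 1260 * X) fun s hs => by
          have hs' := Ioo_subset_Icc_self hs
          have hw0 : 0 < w s := (pow_pos hs.1 3).trans_le (hwb s hs').1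
          have h3 := mul_le_mul_of_nonneg_left (hwb s hs').1 hR0.le
          have hF0s := hF0 s (R * w s)
          rcases le_total X (R * w s) with h | h
          · have h2 := hlow 1260 (R * w s) (mul_pos hR0 hw0) (hX _ h) s hs'
            linarith
          · linarith
        linarith
  obtain ⟨r, R, hr, hrR, hN⟩ := key
  obtain ⟨v, hv, hvr, hvT⟩ := exists_fixedPoint_opT hα hβ hη hk0 hF hF0 hr hrR hN
  obtain ⟨u, huT, huc, hu4, hu0, hu1, hu2, hubc⟩ := exists_solution (α := α) (β := β) hη hk hk0
    (y := fun s => F s (v s)) (hF.comp (continuous_id.prodMk hv))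
  have huv : ∀ t ∈ Icc (0:ℝ) 1, u t = v t := fun t ht => (huT t ht).trans (hvT t ht).symm
  have hpos : ∀ t ∈ Ioo (0:ℝ) 1, 0 < u t := fun t ht => by
    rw [huv t (Ioo_subset_Icc_self ht)]
    exact (mul_pos hr (pow_pos ht.1 3)).trans_le (hvr t (Ioo_subset_Icc_self ht))
  refine ⟨u, huc.continuousOn, hpos, fun t ht => ?_, hu0, hu1, hu2, hubc⟩
  have ht' := Ioo_subset_Icc_self ht
  rw [hu4, ← huv t ht', hFf t ht' _ (hpos t ht).le, neg_add_cancel]
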